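/- Let σ ∈ (0,1] and set W^op_σ := W_{(3+2σ)/4,σ}. If λ ≥ 0, K ⊆ ℕ is a finite set, and Q^σ(f) ≥ (1+λ)·Σ_{n≥1} W^op_σ(n)·f(n)² holds for every finitely supported f : ℕ → ℝ vanishing on K, then λ = 0. -/

import Mathlib

open Real Filter

/-- Generalized binomial coefficient via the Gamma function. -/
noncomputable def rbinom (a b : ℝ) : ℝ :=
  Real.Gamma (a + 1) / (Real.Gamma (b + 1) * Real.Gamma (a - b + 1))

/-- Kernel of the fractional Laplacian `(-Δ_ℕ)^σ` on the discrete half-line. -/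
noncomputable def Kker (σ : ℝ) (m n : ℕ) : ℝ :=
  (-1 : ℝ) ^ (m + n) *
    (rbinom (2 * σ) (σ + m - n) - rbinom (2 * σ) (σ + m + n))

/-- Quadratic form of `(-Δ_ℕ)^σ` (used for finitely supported `f` with `f 0 = 0`). -/
noncomputable def Qform (σ : ℝ) (f : ℕ → ℝ) : ℝ :=
  ∑' m : ℕ, ∑' n : ℕ, Kker σ m n * f m * f n

/-- The Hardy-weight `W_{α,σ}`. -/
noncomputable def Wweight (σ α : ℝ) (n : ℕ) : ℝ :=
  4 ^ σ * (Real.Gamma (3/2 - α + σ) * Real.Gamma α /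
            (Real.Gamma (α - σ) * Real.Gamma (3/2 - α))) *
    (Real.Gamma (n + α - σ - 1) * Real.Gamma (n - α + 2) /
      (Real.Gamma (n - α + σ + 2) * Real.Gamma (n + α - 1)))

/-- The Riesz potential `I_α`. -/
noncomputable def Riesz (α : ℝ) (n : ℕ) : ℝ :=
  (4 * n / (4 ^ α * Real.sqrt 2)) * Real.Gamma (3/2 - α) *
    Real.Gamma (n + α - 1) / (Real.Gamma α * Real.Gamma (n - α + 2))

/-!
In the sine basis `Qform σ` is multiplication by `chord x ^ (2 * σ)`, where
`chord x = |1 - e^{ix}|`, and `Riesz β` is the sequence of sine coefficients of `rieszSymbol β`, a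
multiple of `chord x ^ (-2 * β) * sin x`. Let `4 * α = 3 + 2 * σ`. As `p = 4 * (α - β)` decreases
to `0`, the energy of `Riesz β` in `Qform σ` and `∑ W_{α,σ}(n) * Riesz β n ^ 2` both blow up with
the same leading term `1 / p`. Since `Riesz β n` stays bounded for each `n`, cutting `Riesz β` off
on the finite set `K` changes neither leading term, so a Hardy constant valid off `K` is at most
`1`.

`Riesz β` is not finitely supported. It is approximated by truncating the binomial series of
`chord x ^ (-2 * β)` in powers of `cos (x / 2) ^ 2`: the truncations are sine polynomials, and as
the series has nonnegative terms they increase to `rieszSymbol β`, so their energies stay below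
that of `Riesz β`.
-/

open Set MeasureTheory Topology

section Chord

variable {r x : ℝ}

/-- The chord length `|1 - e^{ix}| = 2 sin (x / 2)` for `0 ≤ x ≤ π`. Its square is the symbol of
`-Δ_ℕ`, so `chord ^ (2 * σ)` is the symbol of `(-Δ_ℕ)^σ`. -/
noncomputable def chord (x : ℝ) : ℝ := 2 * sin (x / 2)

lemma chord_zero : chord 0 = 0 := by simp [chord]

lemma chord_pi : chord π = 2 := by simp [chord]

@[fun_prop]
lemma continuous_chord : Continuous chord := by unfold chord; fun_prop

lemma chord_pos (hx : x ∈ Ioo 0 (2 * π)) : 0 < chord x :=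
  mul_pos two_pos (sin_pos_of_pos_of_lt_pi (by linarith [hx.1]) (by linarith [hx.2]))

lemma chord_pos_of_mem_Ioc (hx : x ∈ Ioc 0 π) : 0 < chord x :=
  chord_pos ⟨hx.1, by linarith [hx.2, pi_pos]⟩

lemma chord_nonneg_of_mem_Icc (hx : x ∈ Icc 0 π) : 0 ≤ chord x :=
  mul_nonneg zero_le_two (sin_nonneg_of_nonneg_of_le_pi (by linarith [hx.1])
    (by linarith [hx.2, pi_pos]))

lemma cos_half_pos (hx : x ∈ Ioo 0 π) : 0 < cos (x / 2) :=
  cos_pos_of_mem_Ioo ⟨by linarith [hx.1, pi_pos], by linarith [hx.2]⟩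

lemma hasDerivAt_chord (x : ℝ) : HasDerivAt chord (cos (x / 2)) x :=
  (((hasDerivAt_id x).div_const 2).sin.const_mul 2).congr_deriv (by simp only [id]; ring)

lemma sin_eq_chord_mul_cos (x : ℝ) : sin x = chord x * cos (x / 2) := by
  rw [chord, ← sin_two_mul, mul_div_cancel₀ x two_ne_zero]

lemma chord_sq (x : ℝ) : chord x ^ 2 = 4 * (1 - cos (x / 2) ^ 2) := by
  rw [chord, mul_pow, sin_sq]; norm_num

lemma two_div_pi_mul_le_chord (hx : x ∈ Icc 0 π) : 2 / π * x ≤ chord x := by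
  have := mul_le_sin (x := x / 2) (by linarith [hx.1]) (by linarith [hx.2])
  rw [chord]; linarith

lemma intervalIntegrable_chord_rpow (hr : -1 < r) :
    IntervalIntegrable (fun x ↦ chord x ^ r) volume 0 π := by
  rcases le_or_gt 0 r with h | h
  · exact (continuous_chord.rpow_const fun _ ↦ Or.inr h).intervalIntegrable _ _
  refine ((intervalIntegral.intervalIntegrable_rpow' hr).const_mul ((2 / π) ^ r)).mono_fun'
    (continuous_chord.measurable.pow_const r).aestronglyMeasurable ?_
  rw [uIoc_of_le pi_pos.le]
  filter_upwards [ae_restrict_mem measurableSet_Ioc] with x hx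
  have hx0 : 0 < 2 / π * x := mul_pos (by positivity) hx.1
  have hchord := chord_pos_of_mem_Ioc hx
  rw [norm_of_nonneg (rpow_nonneg hchord.le r), ← mul_rpow (by positivity) hx.1.le]
  exact rpow_le_rpow_of_nonpos hx0 (two_div_pi_mul_le_chord (Ioc_subset_Icc_self hx)) h.le

lemma intervalIntegrable_chord_rpow_mul (hr : -1 < r) {g : ℝ → ℝ} (hg : Continuous g) :
    IntervalIntegrable (fun x ↦ chord x ^ r * g x) volume 0 π :=
  (intervalIntegrable_chord_rpow hr).mul_continuousOn hg.continuousOn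

lemma integral_chord_rpow_mul_cos_half {p : ℝ} (hp : 0 < p) :
    ∫ x in (0 : ℝ)..π, chord x ^ (p - 1) * cos (x / 2) = 2 ^ p / p := by
  have hderiv : ∀ x ∈ Ioo 0 π,
      HasDerivAt (fun x ↦ chord x ^ p / p) (chord x ^ (p - 1) * cos (x / 2)) x := fun x hx ↦
    (((hasDerivAt_chord x).rpow_const
      (Or.inl (chord_pos_of_mem_Ioc ⟨hx.1, hx.2.le⟩).ne')).div_const p).congr_deriv
        (by field_simp)
  rw [intervalIntegral.integral_eq_sub_of_hasDerivAt_of_le pi_pos.le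
    ((continuous_chord.rpow_const fun _ ↦ Or.inr hp.le).div_const p).continuousOn hderiv
    (intervalIntegrable_chord_rpow_mul (by linarith) (by fun_prop)),
    chord_pi, chord_zero, zero_rpow hp.ne', zero_div, sub_zero]

end Chord

section CosMoment

variable {s : ℝ}

lemma integral_rpow_mul_one_sub_rpow {a b : ℝ} (ha : 0 < a) (hb : 0 < b) :
    ∫ x in (0 : ℝ)..1, x ^ (a - 1) * (1 - x) ^ (b - 1) = Gamma a * Gamma b / Gamma (a + b) := by
  have hcast : Complex.betaIntegral a b =
      ((∫ x in (0 : ℝ)..1, x ^ (a - 1) * (1 - x) ^ (b - 1) : ℝ) : ℂ) := by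
    rw [Complex.betaIntegral, ← intervalIntegral.integral_ofReal]
    refine intervalIntegral.integral_congr fun x hx ↦ ?_
    rw [uIcc_of_le zero_le_one] at hx
    simp only [Complex.ofReal_mul, Complex.ofReal_cpow hx.1,
      Complex.ofReal_cpow (sub_nonneg.2 hx.2)]
    push_cast
    rfl
  have hbeta := ProbabilityTheory.beta_eq_betaIntegralReal a b ha hb
  rw [hcast, Complex.ofReal_re] at hbeta
  exact hbeta.symm

/-- The `k`-th cosine moment of `chord ^ (2 * s)` on `[0, π]`. -/
noncomputable def cosMoment (s : ℝ) (k : ℕ) : ℝ :=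
  ∫ x in (0 : ℝ)..π, chord x ^ (2 * s) * cos (k * x)

/-- The Beta integral after the substitution `u = sin x ^ 2`. -/
lemma integral_sin_rpow_mul_cos_rpow {a b : ℝ} (ha : 0 < a) (hb : 0 < b) :
    ∫ x in (0 : ℝ)..π / 2, sin x ^ (2 * a - 1) * cos x ^ (2 * b - 1) =
      Gamma a * Gamma b / (2 * Gamma (a + b)) := by
  have hsin : ∀ x ∈ Ioo 0 (π / 2), 0 < sin x := fun x hx ↦
    sin_pos_of_pos_of_lt_pi hx.1 (by linarith [hx.2, pi_pos])
  have hcos : ∀ x ∈ Ioo 0 (π / 2), 0 < cos x := fun x hx ↦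
    cos_pos_of_mem_Ioo ⟨by linarith [hx.1, pi_pos], hx.2⟩
  have hderiv (x : ℝ) : HasDerivAt (fun x ↦ sin x ^ 2) (2 * (sin x * cos x)) x :=
    ((hasDerivAt_sin x).pow 2).congr_deriv (by norm_num; ring)
  have hrpow {y c : ℝ} (hy : 0 < y) : (y ^ 2) ^ (c - 1) = y ^ (2 * c - 1) / y := by
    rw [← rpow_natCast_mul hy.le, ← rpow_sub_one hy.ne']
    congr 1; push_cast; ring
  have hintegrand : EqOn (fun x ↦ 2 * (sin x * cos x) *
      ((sin x ^ 2) ^ (a - 1) * (1 - sin x ^ 2) ^ (b - 1)))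
      (fun x ↦ 2 * (sin x ^ (2 * a - 1) * cos x ^ (2 * b - 1))) (Ioo 0 (π / 2)) := fun x hx ↦ by
    have := hsin x hx
    have := hcos x hx
    simp only [← cos_sq', hrpow (hsin x hx), hrpow (hcos x hx)]
    field_simp
  have hsubst := integral_Icc_deriv_smul_of_deriv_nonneg
    (g := fun u : ℝ ↦ u ^ (a - 1) * (1 - u) ^ (b - 1)) (by fun_prop) (fun x _ ↦ hderiv x)
    (fun x hx ↦ by have := hsin x hx; have := hcos x hx; positivity)
    (by positivity : 0 ≤ π / 2)
  simp only [sin_zero, sin_pi_div_two, one_pow, zero_pow two_ne_zero, smul_eq_mul] at hsubst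
  rw [integral_Icc_eq_integral_Ioo, setIntegral_congr_fun measurableSet_Ioo hintegrand,
    integral_const_mul, ← integral_Ioc_eq_integral_Ioo,
    ← intervalIntegral.integral_of_le (by positivity), integral_Icc_eq_integral_Ioc,
    ← intervalIntegral.integral_of_le zero_le_one, integral_rpow_mul_one_sub_rpow ha hb] at hsubst
  rw [mul_comm 2 (Gamma _), ← div_div, ← hsubst]
  ring

lemma cosMoment_zero (hs : -(1 / 2) < s) :
    cosMoment s 0 = √π * 4 ^ s * Gamma (s + 1 / 2) / Gamma (s + 1) := by
  have hscale : cosMoment s 0 = 2 * ∫ x in (0 : ℝ)..π / 2, chord (2 * x) ^ (2 * s) := by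
    rw [intervalIntegral.integral_comp_mul_left (fun x ↦ chord x ^ (2 * s)) two_ne_zero, cosMoment]
    simp [mul_div_cancel₀]
  have hchord : ∀ x ∈ uIcc 0 (π / 2), chord (2 * x) ^ (2 * s) =
      4 ^ s * (sin x ^ (2 * (s + 1 / 2) - 1) * cos x ^ (2 * (1 / 2 : ℝ) - 1)) := fun x hx ↦ by
    rw [uIcc_of_le (by positivity)] at hx
    have hsin : 0 ≤ sin x := sin_nonneg_of_nonneg_of_le_pi hx.1 (by linarith [hx.2, pi_pos])
    rw [chord, mul_div_cancel_left₀ x two_ne_zero, mul_rpow zero_le_two hsin,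
      rpow_mul zero_le_two, mul_one_div_cancel two_ne_zero, sub_self, rpow_zero, mul_one, mul_add,
      mul_one_div_cancel two_ne_zero, add_sub_cancel_right]
    norm_num
  rw [hscale, intervalIntegral.integral_congr hchord, intervalIntegral.integral_const_mul,
    integral_sin_rpow_mul_cos_rpow (by linarith) (by norm_num), Gamma_one_half_eq, add_assoc,
    add_halves]
  ring

lemma cosMoment_succ (hs : -(1 / 2) < s) (k : ℕ) :
    (s + k + 1) * cosMoment s (k + 1) = (k - s) * cosMoment s k := by
  set θ : ℝ → ℝ := fun x ↦ (k + 1 / 2) * x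
  have hcos_succ (x : ℝ) : cos ((k + 1 : ℕ) * x) =
      cos (θ x) * cos (x / 2) - sin (θ x) * sin (x / 2) := by
    rw [← cos_add]; congr 1; simp only [θ]; push_cast; ring
  have hcos (x : ℝ) : cos (k * x) = cos (θ x) * cos (x / 2) + sin (θ x) * sin (x / 2) := by
    rw [← cos_sub]; congr 1; simp only [θ]; ring
  have hint (j : ℕ) : IntervalIntegrable (fun x ↦ chord x ^ (2 * s) * cos (j * x)) volume 0 π :=
    intervalIntegrable_chord_rpow_mul (by linarith) (by fun_prop)
  have hderiv : ∀ x ∈ Ioo 0 π, HasDerivAt (fun x ↦ chord x ^ (2 * s + 1) * cos (θ x))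
      ((s + k + 1) * (chord x ^ (2 * s) * cos ((k + 1 : ℕ) * x)) +
        (s - k) * (chord x ^ (2 * s) * cos (k * x))) x := fun x hx ↦ by
    have hchord := (chord_pos_of_mem_Ioc (Ioo_subset_Ioc_self hx)).ne'
    have hθ : HasDerivAt θ (k + 1 / 2) x :=
      ((hasDerivAt_id x).const_mul _).congr_deriv (mul_one _)
    refine (((hasDerivAt_chord x).rpow_const (Or.inl hchord)).mul hθ.cos).congr_deriv ?_
    rw [hcos_succ, hcos, add_sub_cancel_right, rpow_add_one hchord]
    generalize chord x ^ (2 * s) = P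
    rw [chord]; ring
  have hend : cos (θ π) = 0 := cos_eq_zero_iff.2 ⟨k, by simp only [θ]; push_cast; ring⟩
  have hftc := intervalIntegral.integral_eq_sub_of_hasDerivAt_of_le pi_pos.le
    ((continuous_chord.rpow_const fun _ ↦ Or.inr (by linarith)).mul
      (by fun_prop : Continuous fun x ↦ cos (θ x))).continuousOn hderiv
    (((hint _).const_mul _).add ((hint _).const_mul _))
  rw [intervalIntegral.integral_add ((hint _).const_mul _) ((hint _).const_mul _),
    intervalIntegral.integral_const_mul, intervalIntegral.integral_const_mul] at hftc
  have h0 : (0 : ℝ) ^ (2 * s + 1) = 0 := zero_rpow (by linarith)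
  simp only [Pi.mul_apply, hend, chord_zero, h0, mul_zero, zero_mul, sub_zero] at hftc
  unfold cosMoment
  linarith

lemma inv_Gamma_eq_mul_inv_Gamma_add_one (x : ℝ) : (Gamma x)⁻¹ = x * (Gamma (x + 1))⁻¹ := by
  rcases eq_or_ne x 0 with rfl | hx
  · simp
  · rw [Gamma_add_one hx, mul_inv, mul_inv_cancel_left₀ hx]

lemma add_one_mul_rbinom_add_one (a : ℝ) {b : ℝ} (hb : b + 1 ≠ 0) :
    (b + 1) * rbinom a (b + 1) = (a - b) * rbinom a b := by
  have hrec := inv_Gamma_eq_mul_inv_Gamma_add_one (a - b)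
  have hpred : a - (b + 1) + 1 = a - b := by ring
  simp only [rbinom, div_eq_mul_inv, mul_inv, Gamma_add_one hb, hpred, hrec]
  field_simp

lemma rbinom_sub_eq_rbinom_add (s x : ℝ) : rbinom (2 * s) (s - x) = rbinom (2 * s) (s + x) := by
  rw [rbinom, rbinom, mul_comm (Gamma (s - x + 1))]
  ring_nf

lemma cosMoment_eq_rbinom (hs : -(1 / 2) < s) (k : ℕ) :
    cosMoment s k = π * (-1) ^ k * rbinom (2 * s) (s + k) := by
  induction k with
  | zero =>
    have hdup := Gamma_mul_Gamma_add_half (s + 1 / 2)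
    have hpow : (2 : ℝ) ^ (1 - 2 * (s + 1 / 2)) = (4 ^ s)⁻¹ := by
      rw [show 1 - 2 * (s + 1 / 2) = 2 * -s by ring, rpow_mul two_pos.le, ← rpow_neg (by norm_num)]
      norm_num
    have hΓ : Gamma (s + 1) ≠ 0 := (Gamma_pos_of_pos (by linarith)).ne'
    rw [hpow, add_assoc, add_halves, mul_add, mul_one_div_cancel two_ne_zero] at hdup
    rw [cosMoment_zero hs, rbinom, Nat.cast_zero, add_zero, two_mul s, add_sub_cancel_right,
      ← two_mul]
    nth_rewrite 2 [← mul_self_sqrt pi_pos.le]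
    field_simp at hdup ⊢
    linear_combination hdup
  | succ k ih =>
    have hne : s + k + 1 ≠ 0 := by have := k.cast_nonneg (α := ℝ); linarith
    have hbinom := add_one_mul_rbinom_add_one (2 * s) hne
    rw [add_assoc] at hbinom
    refine mul_left_cancel₀ hne ?_
    rw [cosMoment_succ hs, ih, pow_succ]
    push_cast
    linear_combination π * (-1) ^ k * hbinom

end CosMoment

section Kernel

variable {s : ℝ}

lemma integral_chord_rpow_mul_sin_mul_sin (hs : -(1 / 2) < s) {m n : ℕ} (h : n ≤ m) :
    ∫ x in (0 : ℝ)..π, chord x ^ (2 * s) * (sin (m * x) * sin (n * x)) =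
      (cosMoment s (m - n) - cosMoment s (m + n)) / 2 := by
  have hint (k : ℕ) : IntervalIntegrable (fun x ↦ chord x ^ (2 * s) * cos (k * x)) volume 0 π :=
    intervalIntegrable_chord_rpow_mul (by linarith) (by fun_prop)
  rw [cosMoment, cosMoment, ← intervalIntegral.integral_sub (hint _) (hint _),
    ← intervalIntegral.integral_div]
  congr 1 with x
  rw [Nat.cast_sub h, Nat.cast_add, sub_mul, add_mul, cos_sub, cos_add]
  ring

lemma Kker_comm (s : ℝ) (m n : ℕ) : Kker s m n = Kker s n m := by
  have hsymm := rbinom_sub_eq_rbinom_add s (n - m)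
  rw [sub_sub_eq_add_sub, ← add_sub_assoc] at hsymm
  rw [Kker, Kker, add_comm m n, add_right_comm s, hsymm]

lemma Kker_eq_integral (hs : -(1 / 2) < s) (m n : ℕ) :
    Kker s m n = 2 / π * ∫ x in (0 : ℝ)..π, chord x ^ (2 * s) * (sin (m * x) * sin (n * x)) := by
  wlog h : n ≤ m generalizing m n
  · simp_rw [Kker_comm s m n, mul_comm (sin (m * _)), this n m (le_of_not_ge h)]
  have hsign : (-1 : ℝ) ^ (m + n) = (-1) ^ (m - n) := by
    rw [← Nat.sub_add_cancel h, Nat.add_sub_cancel, add_assoc, pow_add, Even.neg_one_pow ⟨n, rfl⟩,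
      mul_one]
  rw [integral_chord_rpow_mul_sin_mul_sin hs h, cosMoment_eq_rbinom hs, cosMoment_eq_rbinom hs,
    Kker, ← hsign, Nat.cast_sub h, Nat.cast_add, add_sub, add_assoc]
  field_simp

end Kernel

section QuadraticForm

variable {s : ℝ} {f g : ℕ → ℝ} {S : Finset ℕ}

lemma Qform_eq_sum (s : ℝ) (hf : ∀ n ∉ S, f n = 0) :
    Qform s f = ∑ m ∈ S, ∑ n ∈ S, Kker s m n * f m * f n := by
  rw [Qform, tsum_eq_sum fun m hm ↦ by simp [hf m hm]]
  exact Finset.sum_congr rfl fun m _ ↦ tsum_eq_sum fun n hn ↦ by simp [hf n hn]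

lemma Qform_eq_integral (hs : -(1 / 2) < s) (hf : ∀ n ∉ S, f n = 0) :
    Qform s f =
      2 / π * ∫ x in (0 : ℝ)..π, chord x ^ (2 * s) * (∑ n ∈ S, f n * sin (n * x)) ^ 2 := by
  have hexpand (x : ℝ) : chord x ^ (2 * s) * (∑ n ∈ S, f n * sin (n * x)) ^ 2 =
      ∑ m ∈ S, ∑ n ∈ S, f m * f n * (chord x ^ (2 * s) * (sin (m * x) * sin (n * x))) := by
    rw [sq, Finset.sum_mul_sum]
    simp only [Finset.mul_sum]
    exact Finset.sum_congr rfl fun m _ ↦ Finset.sum_congr rfl fun n _ ↦ by ring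
  have hint (m n : ℕ) : IntervalIntegrable
      (fun x ↦ f m * f n * (chord x ^ (2 * s) * (sin (m * x) * sin (n * x)))) volume 0 π :=
    (intervalIntegrable_chord_rpow_mul (by linarith) (by fun_prop)).const_mul _
  simp only [hexpand]
  rw [Qform_eq_sum s hf, intervalIntegral.integral_finsetSum
    fun m _ ↦ by
      simpa only [Finset.sum_fn] using IntervalIntegrable.sum S fun n _ ↦ hint m n, Finset.mul_sum]
  refine Finset.sum_congr rfl fun m _ ↦ ?_
  rw [intervalIntegral.integral_finsetSum fun n _ ↦ hint m n, Finset.mul_sum]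
  refine Finset.sum_congr rfl fun n _ ↦ ?_
  rw [intervalIntegral.integral_const_mul, Kker_eq_integral hs]
  ring

lemma sub_sq_le_of_pos {η : ℝ} (hη : 0 < η) (a b : ℝ) :
    (a - b) ^ 2 ≤ (1 + η) * a ^ 2 + (1 + η⁻¹) * b ^ 2 := by
  have hsq : (1 + η) * a ^ 2 + (1 + η⁻¹) * b ^ 2 - (a - b) ^ 2 = η * (a + η⁻¹ * b) ^ 2 := by
    field_simp; ring
  nlinarith [mul_nonneg hη.le (sq_nonneg (a + η⁻¹ * b))]

lemma Qform_sub_le (hs : -(1 / 2) < s) (hf : ∀ n ∉ S, f n = 0) (hg : ∀ n ∉ S, g n = 0) {η : ℝ}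
    (hη : 0 < η) : Qform s (f - g) ≤ (1 + η) * Qform s f + (1 + η⁻¹) * Qform s g := by
  have hint (h : ℕ → ℝ) : IntervalIntegrable
      (fun x ↦ chord x ^ (2 * s) * (∑ n ∈ S, h n * sin (n * x)) ^ 2) volume 0 π :=
    intervalIntegrable_chord_rpow_mul (by linarith) (by fun_prop)
  have hfg : ∀ n ∉ S, (f - g) n = 0 := fun n hn ↦ by simp [hf n hn, hg n hn]
  rw [Qform_eq_integral hs hf, Qform_eq_integral hs hg, Qform_eq_integral hs hfg,
    mul_left_comm, mul_left_comm (1 + η⁻¹), ← mul_add,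
    ← intervalIntegral.integral_const_mul (1 + η),
    ← intervalIntegral.integral_const_mul (1 + η⁻¹), ← intervalIntegral.integral_add
      ((hint f).const_mul _) ((hint g).const_mul _)]
  refine mul_le_mul_of_nonneg_left (intervalIntegral.integral_mono_on pi_pos.le (hint _)
    (((hint f).const_mul _).add ((hint g).const_mul _)) fun x hx ↦ ?_) (by positivity)
  have hyoung := sub_sq_le_of_pos hη (∑ n ∈ S, f n * sin (n * x)) (∑ n ∈ S, g n * sin (n * x))
  have hchord := rpow_nonneg (chord_nonneg_of_mem_Icc hx) (2 * s)
  simp only [Pi.sub_apply, sub_mul, Finset.sum_sub_distrib]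
  linarith [mul_le_mul_of_nonneg_left hyoung hchord]

end QuadraticForm

section SinePolynomial

variable {F : ℝ → ℝ}

/-- The `n`-th Fourier sine coefficient of `F` on `[0, π]`. -/
noncomputable def sineCoeff (F : ℝ → ℝ) (n : ℕ) : ℝ :=
  2 / π * ∫ x in (0 : ℝ)..π, F x * sin (n * x)

/-- The space of finite linear combinations of the functions `x ↦ sin (n * x)`, that is, of the
functions whose sine coefficients are the finitely supported sequences. -/
def sinePolynomials : Submodule ℝ (ℝ → ℝ) :=
  Submodule.span ℝ (range fun (n : ℕ) (x : ℝ) ↦ sin (n * x))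

lemma sin_mem_sinePolynomials : sin ∈ sinePolynomials :=
  Submodule.subset_span ⟨1, by ext x; simp⟩

lemma cos_mul_mem_sinePolynomials (hF : F ∈ sinePolynomials) : cos * F ∈ sinePolynomials := by
  have hspan : sinePolynomials ≤ sinePolynomials.comap (LinearMap.mulLeft ℝ cos) := by
    refine Submodule.span_le.2 ?_
    rintro _ ⟨n, rfl⟩
    rcases n with _ | n
    · have hzero : (fun x ↦ sin ((0 : ℕ) * x)) = 0 := by ext x; simp
      change cos * (fun x ↦ sin ((0 : ℕ) * x)) ∈ sinePolynomials
      rw [hzero, mul_zero]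
      exact zero_mem _
    have hprod : (cos * fun x ↦ sin ((n + 1 : ℕ) * x)) = (1 / 2 : ℝ) •
        ((fun x ↦ sin ((n + 2 : ℕ) * x)) + fun x ↦ sin (n * x)) := by
      ext x
      have hadd := sin_add ((n + 1 : ℕ) * x) x
      have hsub := sin_sub ((n + 1 : ℕ) * x) x
      simp only [Pi.mul_apply, Pi.smul_apply, Pi.add_apply, smul_eq_mul]
      rw [show (n + 2 : ℕ) * x = (n + 1 : ℕ) * x + x by push_cast; ring,
        show n * x = (n + 1 : ℕ) * x - x by push_cast; ring, hadd, hsub]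
      ring
    change cos * (fun x ↦ sin ((n + 1 : ℕ) * x)) ∈ sinePolynomials
    rw [hprod]
    exact Submodule.smul_mem _ _ (add_mem (Submodule.subset_span ⟨n + 2, rfl⟩)
      (Submodule.subset_span ⟨n, rfl⟩))
  exact hspan hF

lemma cosMoment_zero_left (k : ℕ) : cosMoment 0 k = if k = 0 then π else 0 := by
  induction k with
  | zero => simp [cosMoment]
  | succ k ih =>
    have hrec := cosMoment_succ (s := 0) (by norm_num) k
    have hzero : (k - 0 : ℝ) * cosMoment 0 k = 0 := by rw [ih]; split_ifs <;> simp_all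
    rw [if_neg k.succ_ne_zero]
    exact (mul_eq_zero.1 (hrec.trans hzero)).resolve_left (by positivity)

lemma integral_sin_mul_sin {n : ℕ} (hn : n ≠ 0) (m : ℕ) :
    ∫ x in (0 : ℝ)..π, sin (m * x) * sin (n * x) = if m = n then π / 2 else 0 := by
  have horth {j k : ℕ} (hk : k ≠ 0 ∨ j ≠ 0) (h : j ≤ k) :
      ∫ x in (0 : ℝ)..π, sin (k * x) * sin (j * x) = if k = j then π / 2 else 0 := by
    have hmoment := integral_chord_rpow_mul_sin_mul_sin (s := 0) (by norm_num) h
    simp only [mul_zero, rpow_zero, one_mul, cosMoment_zero_left] at hmoment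
    rw [hmoment, if_neg (by omega : k + j ≠ 0), sub_zero]
    split_ifs <;> first | omega | simp
  rcases le_total n m with h | h
  · exact horth (Or.inr hn) h
  · simp_rw [mul_comm (sin (m * _)), horth (Or.inl hn) h, eq_comm]

lemma sineCoeff_finset_sum (S : Finset ℕ) (c : ℕ → ℝ) {n : ℕ} (hn : n ≠ 0) :
    sineCoeff (fun x ↦ ∑ m ∈ S, c m * sin (m * x)) n = if n ∈ S then c n else 0 := by
  have hint (m : ℕ) : IntervalIntegrable (fun x ↦ c m * (sin (m * x) * sin (n * x))) volume 0 π :=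
    Continuous.intervalIntegrable (by fun_prop) _ _
  simp only [sineCoeff, Finset.sum_mul, mul_assoc]
  rw [intervalIntegral.integral_finsetSum fun m _ ↦ hint m]
  simp only [intervalIntegral.integral_const_mul, integral_sin_mul_sin hn, mul_ite, mul_zero,
    Finset.sum_ite_eq']
  split_ifs
  · field_simp
  · rfl

lemma sineCoeff_zero (F : ℝ → ℝ) : sineCoeff F 0 = 0 := by simp [sineCoeff]

lemma exists_sum_sineCoeff_mul_sin (hF : F ∈ sinePolynomials) : ∃ S : Finset ℕ,
    (∀ n ∉ S, sineCoeff F n = 0) ∧ ∀ x, ∑ n ∈ S, sineCoeff F n * sin (n * x) = F x := by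
  obtain ⟨c, hc⟩ := Finsupp.mem_span_range_iff_exists_finsupp.1 hF
  have hsum : F = fun x ↦ ∑ n ∈ c.support, c n * sin (n * x) := by
    ext x; simp [← hc, Finsupp.sum]
  have hcoeff {n : ℕ} (hn : n ≠ 0) := hsum ▸ sineCoeff_finset_sum c.support c hn
  refine ⟨c.support, fun n hnS ↦ ?_, fun x ↦ ?_⟩
  · rcases eq_or_ne n 0 with rfl | hn
    · exact sineCoeff_zero F
    · rw [hcoeff hn, if_neg hnS]
  · rw [hsum]
    refine Finset.sum_congr rfl fun n hnS ↦ ?_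
    rcases eq_or_ne n 0 with rfl | hn
    · simp
    · rw [← hsum, hcoeff hn, if_pos hnS]

lemma Qform_sineCoeff {s : ℝ} (hs : -(1 / 2) < s) (hF : F ∈ sinePolynomials) :
    Qform s (sineCoeff F) = 2 / π * ∫ x in (0 : ℝ)..π, chord x ^ (2 * s) * F x ^ 2 := by
  obtain ⟨S, hS, hsum⟩ := exists_sum_sineCoeff_mul_sin hF
  simp only [Qform_eq_integral hs hS, hsum]

lemma continuous_of_mem_sinePolynomials (hF : F ∈ sinePolynomials) : Continuous F := by
  obtain ⟨S, -, hsum⟩ := exists_sum_sineCoeff_mul_sin hF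
  rw [← funext hsum]
  fun_prop

end SinePolynomial

section RieszSymbol

variable {β : ℝ}

/-- The function on `[0, π]` whose sine coefficients form the Riesz potential `Riesz β`. -/
noncomputable def rieszSymbol (β x : ℝ) : ℝ := √(π / 2) * (chord x ^ (-2 * β) * sin x)

lemma rieszSymbol_nonneg {x : ℝ} (hx : x ∈ Icc 0 π) : 0 ≤ rieszSymbol β x :=
  mul_nonneg (sqrt_nonneg _) (mul_nonneg (rpow_nonneg (chord_nonneg_of_mem_Icc hx) _)
    (sin_nonneg_of_mem_Icc hx))

lemma chord_rpow_mul_chord_sq {x : ℝ} (hx : x ∈ Ioc 0 π) (β : ℝ) :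
    chord x ^ (-2 * β) * chord x ^ 2 = chord x ^ (2 * (1 - β)) := by
  rw [← rpow_natCast, ← rpow_add (chord_pos_of_mem_Ioc hx)]
  congr 1; push_cast; ring

/-- Near `0` both sines vanish, which compensates the factor `chord x ^ (-2 * β)`. -/
lemma intervalIntegrable_rieszSymbol_mul_sin (hβ : β < 3 / 2) (n : ℕ) :
    IntervalIntegrable (fun x ↦ rieszSymbol β x * sin (n * x)) volume 0 π := by
  have hcheb (x : ℝ) : sin (n * x) = (Polynomial.Chebyshev.U ℝ (n - 1)).eval (cos x) * sin x := by
    rw [Polynomial.Chebyshev.U_real_cos]; push_cast; ring_nf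
  have hint := intervalIntegrable_chord_rpow_mul (r := 2 * (1 - β)) (by linarith)
    (g := fun x ↦ √(π / 2) * cos (x / 2) ^ 2 * (Polynomial.Chebyshev.U ℝ (n - 1)).eval (cos x))
    (by fun_prop)
  refine hint.congr fun x hx ↦ ?_
  rw [uIoc_of_le pi_pos.le] at hx
  simp only [rieszSymbol, hcheb, ← chord_rpow_mul_chord_sq hx]
  rw [sin_eq_chord_mul_cos]
  ring

lemma sineCoeff_rieszSymbol_succ_sub (hβ : β < 3 / 2) (n : ℕ) :
    sineCoeff (rieszSymbol β) (n + 1) - sineCoeff (rieszSymbol β) n =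
      √(π / 2) / π * (cosMoment (1 - β) n + cosMoment (1 - β) (n + 1)) := by
  have hint (k : ℕ) : IntervalIntegrable (fun x ↦ chord x ^ (2 * (1 - β)) * cos (k * x))
      volume 0 π := intervalIntegrable_chord_rpow_mul (by linarith) (by fun_prop)
  have hsin (x : ℝ) : sin x * (sin ((n + 1 : ℕ) * x) - sin (n * x)) =
      chord x ^ 2 * (cos (n * x) + cos ((n + 1 : ℕ) * x)) / 2 := by
    set y := x / 2 with hy
    rw [chord, show x = 2 * y by rw [hy]; ring,
      show (n + 1 : ℕ) * (2 * y) = n * (2 * y) + 2 * y by push_cast; ring, sin_add, cos_add,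
      mul_div_cancel_left₀ _ two_ne_zero, sin_two_mul, cos_two_mul']
    linear_combination (2 * sin y * cos y * sin (n * (2 * y))
      + 2 * sin y ^ 2 * cos (n * (2 * y))) * sin_sq_add_cos_sq y
  rw [sineCoeff, sineCoeff, ← mul_sub, ← intervalIntegral.integral_sub
    (intervalIntegrable_rieszSymbol_mul_sin hβ _) (intervalIntegrable_rieszSymbol_mul_sin hβ _),
    cosMoment, cosMoment, ← intervalIntegral.integral_add (hint _) (hint _),
    ← intervalIntegral.integral_const_mul, ← intervalIntegral.integral_const_mul]
  refine intervalIntegral.integral_congr_uIoo fun x hx ↦ ?_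
  rw [uIoo_of_le pi_pos.le] at hx
  simp only [rieszSymbol, ← chord_rpow_mul_chord_sq (Ioo_subset_Ioc_self hx)]
  linear_combination 2 / π * √(π / 2) * chord x ^ (-2 * β) * hsin x

lemma natCast_mul_cosMoment (hβ : β < 3 / 2) (n : ℕ) :
    √(π / 2) / π * (n * cosMoment (1 - β) n) =
      (β - 1) * sineCoeff (rieszSymbol β) n := by
  induction n with
  | zero => simp [sineCoeff_zero]
  | succ n ih =>
    have hcos := cosMoment_succ (s := 1 - β) (by linarith) n
    have hsin := sineCoeff_rieszSymbol_succ_sub hβ n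
    push_cast
    linear_combination ih + √(π / 2) / π * hcos - (β - 1) * hsin

lemma sineCoeff_rieszSymbol_succ (hβ : β < 3 / 2) (n : ℕ) :
    n * (n + 2 - β) * sineCoeff (rieszSymbol β) (n + 1) =
      (n + 1) * (n + β - 1) * sineCoeff (rieszSymbol β) n := by
  have hcos := cosMoment_succ (s := 1 - β) (by linarith) n
  have hsin := sineCoeff_rieszSymbol_succ_sub hβ n
  have hrel := natCast_mul_cosMoment hβ n
  linear_combination n * (n + 2 - β) * hsin + √(π / 2) / π * n * hcos + (2 * n + 1) * hrel

/-- The factor of `Riesz α n` which does not depend on `n`. -/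
noncomputable def rieszConst (α : ℝ) : ℝ := 4 / (4 ^ α * √2) * (Gamma (3 / 2 - α) / Gamma α)

lemma Riesz_eq (α : ℝ) (n : ℕ) :
    Riesz α n = rieszConst α * (n * (Gamma (n + α - 1) / Gamma (n + 2 - α))) := by
  rw [Riesz, rieszConst, sub_add_eq_add_sub (n : ℝ)]
  ring

lemma Riesz_succ_succ (hβ0 : 0 < β) (hβ : β < 3 / 2) (n : ℕ) :
    (n + 1) * (n + 3 - β) * Riesz β (n + 2) = (n + 2) * (n + β) * Riesz β (n + 1) := by
  have := n.cast_nonneg (α := ℝ)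
  have hnum : Gamma (n + β + 1) = (n + β) * Gamma (n + β) := Gamma_add_one (by linarith)
  have hden : Gamma (n + 3 - β + 1) = (n + 3 - β) * Gamma (n + 3 - β) := Gamma_add_one (by linarith)
  have hden_ne : Gamma (n + 3 - β) ≠ 0 := (Gamma_pos_of_pos (by linarith)).ne'
  have hne : n + 3 - β ≠ 0 := by linarith
  rw [Riesz_eq, Riesz_eq]
  push_cast
  rw [show n + 2 + β - 1 = n + β + 1 by ring, show n + 2 + 2 - β = n + 3 - β + 1 by ring,
    show n + 1 + β - 1 = n + β by ring, show n + 1 + 2 - β = n + 3 - β by ring, hnum, hden]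
  field_simp

lemma Riesz_one (hβ0 : 0 < β) (hβ : β < 3 / 2) :
    Riesz β 1 = √(π / 2) / π * (cosMoment (1 - β) 0 + cosMoment (1 - β) 1) := by
  have hΓ : Gamma (1 - β + 1) ≠ 0 := (Gamma_pos_of_pos (by linarith)).ne'
  have hΓ_succ : Gamma (1 + 2 - β) = (2 - β) * Gamma (1 - β + 1) := by
    rw [show 1 + 2 - β = 2 - β + 1 by ring, Gamma_add_one (by linarith)]; ring_nf
  have hrec := cosMoment_succ (s := 1 - β) (by linarith) 0
  have hzero := cosMoment_zero (s := 1 - β) (by linarith)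
  have h2β : 2 - β ≠ 0 := by linarith
  have hone : cosMoment (1 - β) 0 + cosMoment (1 - β) 1 = cosMoment (1 - β) 0 / (2 - β) := by
    field_simp; push_cast at hrec; linear_combination hrec
  have hΓβ : Gamma β ≠ 0 := (Gamma_pos_of_pos hβ0).ne'
  have hπ : √π ^ 2 = π := sq_sqrt pi_pos.le
  rw [hone, hzero, Riesz_eq, rieszConst, rpow_sub (by norm_num), Nat.cast_one, hΓ_succ,
    add_sub_cancel_left, sqrt_div pi_pos.le, show 1 - β + 1 / 2 = 3 / 2 - β by ring, rpow_one]
  field_simp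
  rw [hπ]

lemma sineCoeff_rieszSymbol (hβ0 : 0 < β) (hβ : β < 3 / 2) (n : ℕ) :
    sineCoeff (rieszSymbol β) n = Riesz β n := by
  induction n with
  | zero => simp [sineCoeff_zero, Riesz]
  | succ n ih =>
    rcases n with _ | n
    · rw [Riesz_one hβ0 hβ, ← sineCoeff_rieszSymbol_succ_sub hβ, sineCoeff_zero, sub_zero]
    · have hne : (n + 1) * (n + 3 - β) ≠ 0 :=
        mul_ne_zero (by positivity) (by linarith [n.cast_nonneg (α := ℝ)])
      have hrec := sineCoeff_rieszSymbol_succ hβ (n + 1)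
      refine mul_left_cancel₀ hne ?_
      rw [Riesz_succ_succ hβ0 hβ, ← ih]
      push_cast at hrec
      linear_combination hrec

end RieszSymbol

section RieszApprox

variable {β x : ℝ}

lemma multichoose_nonneg (hβ : 0 < β) (k : ℕ) : 0 ≤ Ring.multichoose β k := by
  have hfact := Ring.factorial_nsmul_multichoose_eq_ascPochhammer β k
  rw [Polynomial.ascPochhammer_smeval_eq_eval, nsmul_eq_mul] at hfact
  exact (pos_of_mul_pos_right (hfact ▸ ascPochhammer_pos k β hβ) (by positivity)).le

lemma hasSum_multichoose_mul_pow (β : ℝ) {t : ℝ} (ht : |t| < 1) :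
    HasSum (fun k ↦ Ring.multichoose β k * t ^ k) ((1 - t) ^ (-β)) := by
  have hsum := (one_div_one_sub_rpow_hasFPowerSeriesOnBall_zero β).hasSum (y := t)
    (by simpa [enorm_eq_ofReal_abs])
  simpa [FormalMultilinearSeries.ofScalars_apply_eq, Ring.multichoose_eq, rpow_neg,
    sub_nonneg.2 (abs_lt.1 ht).2.le, mul_comm] using hsum

lemma hasSum_chord_rpow (β : ℝ) (hx : x ∈ Ioc 0 π) :
    HasSum (fun k ↦ 4 ^ (-β) * (Ring.multichoose β k * (cos (x / 2) ^ 2) ^ k))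
      (chord x ^ (-2 * β)) := by
  have hchord := chord_pos_of_mem_Ioc hx
  have hcos : |cos (x / 2) ^ 2| < 1 := by
    rw [abs_of_nonneg (sq_nonneg _)]; nlinarith [chord_sq x]
  have hrpow : chord x ^ (-2 * β) = 4 ^ (-β) * (1 - cos (x / 2) ^ 2) ^ (-β) := by
    rw [← mul_rpow (by norm_num) (by linarith [(abs_lt.1 hcos).2]), ← chord_sq,
      ← rpow_natCast_mul hchord.le]
    congr 1; push_cast; ring
  rw [hrpow]
  exact (hasSum_multichoose_mul_pow β hcos).mul_left _

/-- The sine polynomials obtained from `rieszSymbol β` by truncating the binomial series of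
`chord x ^ (-2 * β) = 4 ^ (-β) * (1 - cos (x / 2) ^ 2) ^ (-β)`. -/
noncomputable def rieszApprox (β : ℝ) (j : ℕ) (x : ℝ) : ℝ :=
  √(π / 2) * ((∑ k ∈ Finset.range j,
    4 ^ (-β) * (Ring.multichoose β k * (cos (x / 2) ^ 2) ^ k)) * sin x)

lemma rieszApprox_mem_sinePolynomials (β : ℝ) (j : ℕ) : rieszApprox β j ∈ sinePolynomials := by
  have hpow (k : ℕ) : (fun x ↦ (cos (x / 2) ^ 2) ^ k * sin x) ∈ sinePolynomials := by
    induction k with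
    | zero => simpa using sin_mem_sinePolynomials
    | succ k ih =>
      convert sinePolynomials.smul_mem (1 / 2) (add_mem ih (cos_mul_mem_sinePolynomials ih)) using 1
      ext x
      have hhalf : cos (x / 2) ^ 2 = (1 + cos x) / 2 := by
        rw [cos_sq, mul_div_cancel₀ x two_ne_zero]; ring
      simp only [Pi.smul_apply, Pi.add_apply, Pi.mul_apply, smul_eq_mul, pow_succ _ k]
      nth_rewrite 2 [hhalf]
      ring
  convert sum_mem fun k (_ : k ∈ Finset.range j) ↦
    sinePolynomials.smul_mem (√(π / 2) * (4 ^ (-β) * Ring.multichoose β k)) (hpow k) using 1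
  ext x
  simp only [rieszApprox, Finset.sum_apply, Pi.smul_apply, smul_eq_mul, Finset.sum_mul,
    Finset.mul_sum]
  exact Finset.sum_congr rfl fun k _ ↦ by ring

lemma rieszApprox_nonneg (hβ : 0 < β) (j : ℕ) (hx : x ∈ Ioc 0 π) : 0 ≤ rieszApprox β j x :=
  mul_nonneg (sqrt_nonneg _) (mul_nonneg (Finset.sum_nonneg fun k _ ↦ by
    have := multichoose_nonneg hβ k; positivity) (sin_nonneg_of_mem_Icc (Ioc_subset_Icc_self hx)))

lemma rieszApprox_le_rieszSymbol (hβ : 0 < β) (j : ℕ) (hx : x ∈ Ioc 0 π) :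
    rieszApprox β j x ≤ rieszSymbol β x := by
  refine mul_le_mul_of_nonneg_left (mul_le_mul_of_nonneg_right ?_
    (sin_nonneg_of_mem_Icc (Ioc_subset_Icc_self hx))) (sqrt_nonneg _)
  exact sum_le_hasSum _ (fun k _ ↦ by have := multichoose_nonneg hβ k; positivity)
    (hasSum_chord_rpow β hx)

lemma tendsto_rieszApprox (β : ℝ) (hx : x ∈ Ioc 0 π) :
    Tendsto (fun j ↦ rieszApprox β j x) atTop (𝓝 (rieszSymbol β x)) :=
  ((hasSum_chord_rpow β hx).tendsto_sum_nat.mul_const _).const_mul _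

lemma tendsto_sineCoeff_rieszApprox (hβ0 : 0 < β) (hβ : β < 3 / 2) (n : ℕ) :
    Tendsto (fun j ↦ sineCoeff (rieszApprox β j) n) atTop (𝓝 (Riesz β n)) := by
  rw [← sineCoeff_rieszSymbol hβ0 hβ]
  refine (intervalIntegral.tendsto_integral_filter_of_dominated_convergence
    (fun x ↦ |rieszSymbol β x * sin (n * x)|) (.of_forall fun j ↦ ?_)
    (.of_forall fun j ↦ .of_forall fun x hx ↦ ?_)
    (intervalIntegrable_rieszSymbol_mul_sin hβ n).abs
    (.of_forall fun x hx ↦ ?_)).const_mul _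
  · have := continuous_of_mem_sinePolynomials (rieszApprox_mem_sinePolynomials β j)
    exact Continuous.aestronglyMeasurable (by fun_prop)
  · rw [uIoc_of_le pi_pos.le] at hx
    rw [norm_mul, norm_of_nonneg (rieszApprox_nonneg hβ0 j hx), abs_mul,
      abs_of_nonneg (rieszSymbol_nonneg (Ioc_subset_Icc_self hx))]
    exact mul_le_mul_of_nonneg_right (rieszApprox_le_rieszSymbol hβ0 j hx) (abs_nonneg _)
  · rw [uIoc_of_le pi_pos.le] at hx
    exact (tendsto_rieszApprox β hx).mul_const _

lemma chord_rpow_mul_rieszSymbol_sq_le (s : ℝ) (hx : x ∈ Ioo 0 π) :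
    chord x ^ (2 * s) * rieszSymbol β x ^ 2 ≤
      π / 2 * (chord x ^ (2 * s + 3 - 4 * β - 1) * cos (x / 2)) := by
  have hchord := chord_pos_of_mem_Ioc (Ioo_subset_Ioc_self hx)
  have hcos := cos_half_pos hx
  have hrpow : chord x ^ (2 * s) * (chord x ^ (-2 * β) * chord x) ^ 2 =
      chord x ^ (2 * s + 3 - 4 * β - 1) := by
    rw [← rpow_add_one hchord.ne', ← rpow_mul_natCast hchord.le, ← rpow_add hchord]
    congr 1; push_cast; ring
  calc chord x ^ (2 * s) * rieszSymbol β x ^ 2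
      = π / 2 * (chord x ^ (2 * s + 3 - 4 * β - 1) * cos (x / 2) ^ 2) := by
        rw [rieszSymbol, sin_eq_chord_mul_cos, mul_pow, sq_sqrt (by positivity), ← hrpow]; ring
    _ ≤ π / 2 * (chord x ^ (2 * s + 3 - 4 * β - 1) * cos (x / 2)) := by
        have := pow_le_of_le_one hcos.le (cos_le_one (x / 2)) two_ne_zero
        gcongr

lemma Qform_sineCoeff_rieszApprox_le {s : ℝ} (hs : -(1 / 2) < s) (hβ0 : 0 < β)
    (hβ : 4 * β < 2 * s + 3) (j : ℕ) :
    Qform s (sineCoeff (rieszApprox β j)) ≤ 2 ^ (2 * s + 3 - 4 * β) / (2 * s + 3 - 4 * β) := by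
  have hmem := rieszApprox_mem_sinePolynomials β j
  have hcont := continuous_of_mem_sinePolynomials hmem
  have hle : ∫ x in (0 : ℝ)..π, chord x ^ (2 * s) * rieszApprox β j x ^ 2 ≤
      ∫ x in (0 : ℝ)..π, π / 2 * (chord x ^ (2 * s + 3 - 4 * β - 1) * cos (x / 2)) := by
    refine intervalIntegral.integral_mono_on_of_le_Ioo pi_pos.le
      (intervalIntegrable_chord_rpow_mul (by linarith) (by fun_prop))
      ((intervalIntegrable_chord_rpow_mul (by linarith) (by fun_prop)).const_mul _) fun x hx ↦ ?_
    have hx' := Ioo_subset_Ioc_self hx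
    have := rpow_nonneg (chord_pos_of_mem_Ioc hx').le (2 * s)
    have := pow_le_pow_left₀ (rieszApprox_nonneg hβ0 j hx') (rieszApprox_le_rieszSymbol hβ0 j hx') 2
    exact (by gcongr : _ ≤ chord x ^ (2 * s) * rieszSymbol β x ^ 2).trans
      (chord_rpow_mul_rieszSymbol_sq_le s hx)
  rw [intervalIntegral.integral_const_mul, integral_chord_rpow_mul_cos_half (by linarith)] at hle
  rw [Qform_sineCoeff hs hmem]
  calc _ ≤ 2 / π * (π / 2 * (2 ^ (2 * s + 3 - 4 * β) / (2 * s + 3 - 4 * β))) := by gcongr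
    _ = _ := by field_simp

end RieszApprox

section GammaRatio

lemma rpow_sub_le_Gamma_div_Gamma {x y X : ℝ} (hx : 0 < x) (hxy : x ≤ y) (hyX : y ≤ X) :
    X ^ (x - y) ≤ Gamma x / Gamma y := by
  have hy := hx.trans_le hxy
  have hlog : log (Gamma y) - log (Gamma x) ≤ log X * (y - x) := by
    rcases hxy.eq_or_lt with rfl | hlt
    · simp
    have hslope := convexOn_log_Gamma.slope_mono_adjacent hx (mem_Ioi.2 (by linarith : 0 < y + 1))
      hlt (lt_add_one y)
    simp only [Function.comp_apply, Gamma_add_one hy.ne',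
      log_mul hy.ne' (Gamma_pos_of_pos hy).ne', add_sub_cancel_right, add_sub_cancel_left,
      div_one] at hslope
    exact (div_le_iff₀ (sub_pos.2 hlt)).1 (hslope.trans (log_le_log hy hyX))
  rw [rpow_def_of_pos (hy.trans_le hyX),
    ← exp_log (div_pos (Gamma_pos_of_pos hx) (Gamma_pos_of_pos hy)),
    log_div (Gamma_pos_of_pos hx).ne' (Gamma_pos_of_pos hy).ne']
  exact exp_le_exp.2 (by linarith)

lemma continuousAt_Gamma_comp {E : Type*} [TopologicalSpace E] {f : E → ℝ} {a : E}
    (hf : ContinuousAt f a) (ha : 0 < f a) : ContinuousAt (fun x ↦ Gamma (f x)) a :=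
  (differentiableAt_Gamma fun m ↦ by linarith [m.cast_nonneg (α := ℝ)]).continuousAt.comp hf

end GammaRatio

section OptimalWeight

variable {σ α β : ℝ}

lemma rieszConst_pos (hα0 : 0 < α) (hα : α < 3 / 2) : 0 < rieszConst α :=
  mul_pos (by positivity) (div_pos (Gamma_pos_of_pos (by linarith)) (Gamma_pos_of_pos hα0))

lemma Wweight_eq (hσ : 4 * α = 3 + 2 * σ) (hα0 : 0 < α) (hα : α < 3 / 2) (n : ℕ) :
    Wweight σ α n = (rieszConst α ^ 2)⁻¹ * (Gamma (n + 1 / 2 - α) * Gamma (n + 2 - α) /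
      (Gamma (n + 1 / 2 + α) * Gamma (n + α - 1))) := by
  obtain rfl : σ = 2 * α - 3 / 2 := by linarith
  have : Gamma (3 / 2 - α) ≠ 0 := (Gamma_pos_of_pos (by linarith)).ne'
  have hα0' : Gamma α ≠ 0 := (Gamma_pos_of_pos hα0).ne'
  have hpow : (4 : ℝ) ^ (2 * α - 3 / 2) = (4 ^ α) ^ 2 / 8 := by
    have h8 : (4 : ℝ) ^ (3 / 2 : ℝ) = 8 := by
      rw [show (4 : ℝ) = 2 ^ (2 : ℝ) by norm_num, ← rpow_mul zero_le_two]; norm_num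
    rw [rpow_sub (by norm_num), h8, mul_comm, rpow_mul (by norm_num), rpow_two]
  have h2 : √2 ^ 2 = (2 : ℝ) := sq_sqrt zero_le_two
  rw [Wweight, rieszConst, hpow, show 3 / 2 - α + (2 * α - 3 / 2) = α by ring,
    show α - (2 * α - 3 / 2) = 3 / 2 - α by ring,
    show n + α - (2 * α - 3 / 2) - 1 = n + 1 / 2 - α by ring, sub_add_eq_add_sub (n : ℝ),
    show n - α + (2 * α - 3 / 2) + 2 = n + 1 / 2 + α by ring]
  field_simp
  rw [h2]
  ring

lemma Wweight_nonneg (hσ : 4 * α = 3 + 2 * σ) (hα0 : 0 < α) (hα : α < 3 / 2) {n : ℕ} (hn : n ≠ 0) :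
    0 ≤ Wweight σ α n := by
  have hn : (1 : ℝ) ≤ n := by exact_mod_cast Nat.one_le_iff_ne_zero.2 hn
  have hΓ {x : ℝ} (hx : 0 < x) := (Gamma_pos_of_pos hx).le
  rw [Wweight_eq hσ hα0 hα]
  exact mul_nonneg (by positivity) (div_nonneg
    (mul_nonneg (hΓ (by linarith)) (hΓ (by linarith)))
    (mul_nonneg (hΓ (by linarith)) (hΓ (by linarith))))

lemma rieszConst_div_sq_mul_le_Wweight_mul_Riesz_sq (hσ : 4 * α = 3 + 2 * σ) (hα : α < 3 / 2)
    (hβ0 : 0 < β) (hβ : β ≤ α) (n : ℕ) :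
    (rieszConst β / rieszConst α) ^ 2 * (n ^ 2 * (n + 2 : ℝ) ^ (-(3 + 4 * (α - β)))) ≤
      Wweight σ α n * Riesz β n ^ 2 := by
  rcases eq_or_ne n 0 with rfl | hn
  · simp [Riesz]
  have hn : (1 : ℝ) ≤ n := by exact_mod_cast Nat.one_le_iff_ne_zero.2 hn
  have hX : (0 : ℝ) < n + 2 := by positivity
  have hratio {x y : ℝ} (hx : 0 < x) (hxy : x ≤ y) (hy : y ≤ n + 2) :=
    rpow_sub_le_Gamma_div_Gamma hx hxy hy
  have h1 := hratio (x := n + 1 / 2 - α) (y := n + 1 / 2 + α) (by linarith) (by linarith)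
    (by linarith)
  have h2 := hratio (x := n + β - 1) (y := n + α - 1) (by linarith) (by linarith) (by linarith)
  have h3 := hratio (x := n + 2 - α) (y := n + 2 - β) (by linarith) (by linarith) (by linarith)
  have h4 := hratio (x := n + β - 1) (y := n + 2 - β) (by linarith) (by linarith) (by linarith)
  have hexp : (n + 2 : ℝ) ^ (-(3 + 4 * (α - β))) = (n + 2 : ℝ) ^ (n + 1 / 2 - α - (n + 1 / 2 + α)) *
      (n + 2 : ℝ) ^ (n + β - 1 - (n + α - 1)) * (n + 2 : ℝ) ^ (n + 2 - α - (n + 2 - β)) *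
      (n + 2 : ℝ) ^ (n + β - 1 - (n + 2 - β)) := by
    rw [← rpow_add hX, ← rpow_add hX, ← rpow_add hX]; ring_nf
  rw [Wweight_eq hσ (hβ0.trans_le hβ) hα, Riesz_eq, hexp]
  calc _ ≤ (rieszConst β / rieszConst α) ^ 2 * (n ^ 2 *
        (Gamma (n + 1 / 2 - α) / Gamma (n + 1 / 2 + α) * (Gamma (n + β - 1) / Gamma (n + α - 1)) *
          (Gamma (n + 2 - α) / Gamma (n + 2 - β)) * (Gamma (n + β - 1) / Gamma (n + 2 - β)))) := by
        have h1' := (rpow_nonneg hX.le _).trans h1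
        have h2' := (rpow_nonneg hX.le _).trans h2
        have h3' := (rpow_nonneg hX.le _).trans h3
        gcongr
    _ = _ := by ring

lemma continuousAt_rieszConst (hα0 : 0 < α) (hα : α < 3 / 2) : ContinuousAt rieszConst α := by
  have hΓ : ContinuousAt Gamma α := continuousAt_Gamma_comp continuousAt_id hα0
  have hΓ_sub : ContinuousAt (fun β ↦ Gamma (3 / 2 - β)) α :=
    continuousAt_Gamma_comp (by fun_prop) (by linarith)
  have hpow : ContinuousAt (fun β : ℝ ↦ (4 : ℝ) ^ β) α :=
    continuousAt_const_rpow four_ne_zero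
  unfold rieszConst
  exact (continuousAt_const.div (hpow.mul continuousAt_const)
    (by positivity : (4 : ℝ) ^ α * √2 ≠ 0)).mul (hΓ_sub.div hΓ (Gamma_pos_of_pos hα0).ne')

lemma continuousAt_Riesz (hα0 : 0 < α) (hα : α < 3 / 2) (n : ℕ) :
    ContinuousAt (fun β ↦ Riesz β n) α := by
  rcases eq_or_ne n 0 with rfl | hn
  · simpa [Riesz] using continuousAt_const
  have hn : (1 : ℝ) ≤ n := by exact_mod_cast Nat.one_le_iff_ne_zero.2 hn
  have hnum : ContinuousAt (fun β ↦ Gamma (n + β - 1)) α :=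
    continuousAt_Gamma_comp (by fun_prop) (by linarith)
  have hden : ContinuousAt (fun β ↦ Gamma (n + 2 - β)) α :=
    continuousAt_Gamma_comp (by fun_prop) (by linarith)
  simp only [Riesz_eq]
  exact (continuousAt_rieszConst hα0 hα).mul (continuousAt_const.mul
    (hnum.div hden (Gamma_pos_of_pos (by linarith)).ne'))

end OptimalWeight

section HardyOff

/-- The inequality `c * ∑ w n * f n ^ 2 ≤ Qform s f` holds for all finitely supported `f` on the
half-line which vanish on `K`; the half-line is encoded by `f 0 = 0`. -/
def HardyOff (s c : ℝ) (w : ℕ → ℝ) (K : Finset ℕ) : Prop :=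
  ∀ f : ℕ → ℝ, f 0 = 0 → (Function.support f).Finite → (∀ n ∈ K, f n = 0) →
    c * (∑' n : ℕ, w n * f n ^ 2) ≤ Qform s f

variable {s c η σ α β p : ℝ} {w f : ℕ → ℝ} {K S : Finset ℕ}

lemma tendsto_Qform_indicator {ι : Type*} {l : Filter ι} {F : ι → ℕ → ℝ} (s : ℝ) (K : Finset ℕ)
    (h : ∀ n, Tendsto (F · n) l (𝓝 (f n))) :
    Tendsto (fun i ↦ Qform s ((K : Set ℕ).indicator (F i))) l
      (𝓝 (Qform s ((K : Set ℕ).indicator f))) := by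
  have hind (g : ℕ → ℝ) : Qform s ((K : Set ℕ).indicator g) =
      ∑ m ∈ K, ∑ n ∈ K, Kker s m n * g m * g n := by
    rw [Qform_eq_sum s fun n hn ↦ indicator_of_notMem (Finset.mem_coe.not.2 hn) g]
    exact Finset.sum_congr rfl fun m hm ↦ Finset.sum_congr rfl fun n hn ↦ by
      rw [indicator_of_mem (Finset.mem_coe.2 hm), indicator_of_mem (Finset.mem_coe.2 hn)]
  simp only [hind]
  exact tendsto_finsetSum _ fun m _ ↦ tendsto_finsetSum _ fun n _ ↦
    ((h m).const_mul _).mul (h n)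

/-- The inequality is applied to `f` cut off on `K`; the form of the part cut off is finite. -/
lemma HardyOff.mul_sum_sdiff_le (h : HardyOff s c w K) (hs : -(1 / 2) < s) (hc : 0 ≤ c)
    (hw : ∀ n ≠ 0, 0 ≤ w n) (hf0 : f 0 = 0) (hf : ∀ n ∉ S, f n = 0) (hη : 0 < η) (T : Finset ℕ) :
    c * ∑ n ∈ T \ K, w n * f n ^ 2 ≤
      (1 + η) * Qform s f + (1 + η⁻¹) * Qform s ((K : Set ℕ).indicator f) := by
  have hcut := indicator_compl (K : Set ℕ) f
  have hind (A : Set ℕ) : ∀ n ∉ S, A.indicator f n = 0 := fun n hn ↦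
    indicator_apply_eq_zero.2 fun _ ↦ hf n hn
  have hle : ∑ n ∈ T \ K, w n * f n ^ 2 ≤ ∑' n, w n * (K : Set ℕ)ᶜ.indicator f n ^ 2 := by
    have hnonneg (n : ℕ) : 0 ≤ w n * (K : Set ℕ)ᶜ.indicator f n ^ 2 := by
      rcases eq_or_ne n 0 with rfl | hn
      · simp [indicator_apply, hf0]
      · exact mul_nonneg (hw n hn) (sq_nonneg _)
    have hsum : Summable fun n ↦ w n * (K : Set ℕ)ᶜ.indicator f n ^ 2 :=
      summable_of_ne_finset_zero (s := S) fun n hn ↦ by simp [hind _ n hn]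
    refine (Finset.sum_congr rfl fun n hn ↦ ?_).trans_le
      (hsum.sum_le_tsum (T \ K) fun n _ ↦ hnonneg n)
    rw [indicator_of_mem (by simpa using (Finset.mem_sdiff.1 hn).2)]
  calc c * ∑ n ∈ T \ K, w n * f n ^ 2
      ≤ c * ∑' n, w n * (K : Set ℕ)ᶜ.indicator f n ^ 2 := by gcongr
    _ ≤ Qform s ((K : Set ℕ)ᶜ.indicator f) :=
        h _ (by simp [indicator_apply, hf0])
          (S.finite_toSet.subset fun n hn ↦ by by_contra hnS; exact hn (hind _ n hnS))
          fun n hn ↦ indicator_of_notMem (by simpa using hn) _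
    _ ≤ _ := hcut ▸ Qform_sub_le hs hf (hind K) hη

lemma summable_add_two_rpow (hp : 1 < p) : Summable fun n : ℕ ↦ (n + 2 : ℝ) ^ (-p) := by
  have := (summable_nat_add_iff 2).2 (summable_nat_rpow.2 (neg_lt_neg hp))
  simpa using this

lemma tendsto_mul_tsum_add_two_rpow :
    Tendsto (fun p : ℝ ↦ p * ∑' n : ℕ, (n + 2 : ℝ) ^ (-(1 + p))) (𝓝[>] 0) (𝓝 1) := by
  have hshift : Tendsto (fun p : ℝ ↦ 1 + p) (𝓝[>] 0) (𝓝[>] 1) := by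
    refine tendsto_nhdsWithin_iff.2 ⟨Tendsto.mono_left ?_ nhdsWithin_le_nhds, ?_⟩
    · exact (by fun_prop : Continuous fun p : ℝ ↦ 1 + p).tendsto' 0 1 (add_zero 1)
    · filter_upwards [self_mem_nhdsWithin] with p hp
      exact lt_add_of_pos_right 1 (mem_Ioi.1 hp)
  have hp0 : Tendsto (fun p : ℝ ↦ p) (𝓝[>] 0) (𝓝 0) := nhdsWithin_le_nhds
  have hzeta := (tendsto_sub_mul_tsum_nat_rpow.comp hshift).sub hp0
  rw [sub_zero] at hzeta
  refine hzeta.congr' ?_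
  filter_upwards [self_mem_nhdsWithin] with p hp
  have hsum : Summable fun n : ℕ ↦ 1 / (n : ℝ) ^ (1 + p) :=
    summable_one_div_nat_rpow.2 (lt_add_of_pos_right 1 (mem_Ioi.1 hp))
  have hne : 1 + p ≠ 0 := by linarith [mem_Ioi.1 hp]
  have hterm (n : ℕ) : (n + 2 : ℝ) ^ (-(1 + p)) = 1 / ((n + 2 : ℕ) : ℝ) ^ (1 + p) := by
    rw [rpow_neg (by positivity), one_div]; push_cast; rfl
  simp only [Function.comp_apply, ← hsum.sum_add_tsum_nat_add 2, hterm, Finset.sum_range_succ,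
    Finset.sum_range_zero, Nat.cast_zero, zero_rpow hne, Nat.cast_one, one_rpow]
  ring

lemma add_two_rpow_sub_le (hp : 0 ≤ p) (n : ℕ) :
    (n + 2 : ℝ) ^ (-(1 + p)) - 4 * (n + 2 : ℝ) ^ (-2 : ℝ) ≤
      n ^ 2 * (n + 2 : ℝ) ^ (-(3 + p)) := by
  have hX : (0 : ℝ) < n + 2 := by positivity
  have h1 : (n + 2 : ℝ) ^ (-(1 + p)) = (n + 2 : ℝ) ^ 2 * (n + 2 : ℝ) ^ (-(3 + p)) := by
    rw [← rpow_natCast, ← rpow_add hX]; congr 1; push_cast; ring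
  have h2 : (n + 2) * (n + 2 : ℝ) ^ (-(3 + p)) ≤ (n + 2 : ℝ) ^ (-2 : ℝ) := by
    rw [mul_comm, ← rpow_add_one hX.ne']
    exact rpow_le_rpow_of_exponent_le (by linarith) (by linarith)
  have h3 := rpow_nonneg hX.le (-(3 + p))
  nlinarith

lemma sum_add_two_rpow_sub_card_le (hp : 0 ≤ p) (K T : Finset ℕ) :
    ∑ n ∈ T, ((n + 2 : ℝ) ^ (-(1 + p)) - 4 * (n + 2 : ℝ) ^ (-2 : ℝ)) - K.card ≤
      ∑ n ∈ T \ K, (n : ℝ) ^ 2 * (n + 2 : ℝ) ^ (-(3 + p)) := by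
  have hone (n : ℕ) : (n + 2 : ℝ) ^ (-(1 + p)) - 4 * (n + 2 : ℝ) ^ (-2 : ℝ) ≤ 1 := by
    have hle : (n + 2 : ℝ) ^ (-(1 + p)) ≤ 1 :=
      rpow_le_one_of_one_le_of_nonpos (by linarith [n.cast_nonneg (α := ℝ)]) (by linarith)
    have : (0 : ℝ) ≤ (n + 2 : ℝ) ^ (-2 : ℝ) := by positivity
    linarith
  have hinter : ∑ n ∈ T ∩ K, ((n + 2 : ℝ) ^ (-(1 + p)) - 4 * (n + 2 : ℝ) ^ (-2 : ℝ)) ≤ K.card :=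
    calc _ ≤ ((T ∩ K).card : ℝ) := by simpa using Finset.sum_le_card_nsmul _ _ 1 fun n _ ↦ hone n
      _ ≤ K.card := by exact_mod_cast Finset.card_le_card Finset.inter_subset_right
  have hsdiff := Finset.sum_le_sum fun n (_ : n ∈ T \ K) ↦ add_two_rpow_sub_le hp n
  rw [← Finset.sum_inter_add_sum_sdiff T K]
  linarith

lemma HardyOff.mul_sum_sdiff_Riesz_le (h : HardyOff s c w K) (hs : -(1 / 2) < s) (hc : 0 ≤ c)
    (hw : ∀ n ≠ 0, 0 ≤ w n) (hβ0 : 0 < β) (hβ : β < 3 / 2) (hsβ : 4 * β < 2 * s + 3) (hη : 0 < η)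
    (T : Finset ℕ) :
    c * ∑ n ∈ T \ K, w n * Riesz β n ^ 2 ≤
      (1 + η) * (2 ^ (2 * s + 3 - 4 * β) / (2 * s + 3 - 4 * β)) +
        (1 + η⁻¹) * Qform s ((K : Set ℕ).indicator (Riesz β)) := by
  have hcoeff := tendsto_sineCoeff_rieszApprox hβ0 hβ
  refine le_of_tendsto_of_tendsto'
    ((tendsto_finsetSum _ fun n _ ↦ ((hcoeff n).pow 2).const_mul (w n)).const_mul c)
    (((tendsto_Qform_indicator s K hcoeff).const_mul _).const_add _) fun j ↦ ?_
  obtain ⟨S, hS, -⟩ := exists_sum_sineCoeff_mul_sin (rieszApprox_mem_sinePolynomials β j)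
  refine (h.mul_sum_sdiff_le hs hc hw (sineCoeff_zero _) hS hη T).trans ?_
  gcongr
  exact Qform_sineCoeff_rieszApprox_le hs hβ0 hsβ j

lemma HardyOff.mul_tsum_sub_le (h : HardyOff σ c (Wweight σ α) K) (hc : 0 ≤ c)
    (hσ : 4 * α = 3 + 2 * σ) (hα0 : 1 / 2 < α) (hα : α < 3 / 2) (hp0 : 0 < p)
    (hp : p < 4 * α) (hη : 0 < η) :
    c * ((rieszConst (α - p / 4) / rieszConst α) ^ 2 *
        (∑' n : ℕ, (n + 2 : ℝ) ^ (-(1 + p)) - (4 * ∑' n : ℕ, (n + 2 : ℝ) ^ (-2 : ℝ) + K.card))) ≤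
      (1 + η) * (2 ^ p / p) +
        (1 + η⁻¹) * Qform σ ((K : Set ℕ).indicator (Riesz (α - p / 4))) := by
  set κ := (rieszConst (α - p / 4) / rieszConst α) ^ 2
  have hlower (T : Finset ℕ) : κ * (∑ n ∈ T,
      ((n + 2 : ℝ) ^ (-(1 + p)) - 4 * (n + 2 : ℝ) ^ (-2 : ℝ)) - K.card) ≤
      ∑ n ∈ T \ K, Wweight σ α n * Riesz (α - p / 4) n ^ 2 := by
    refine (mul_le_mul_of_nonneg_left (sum_add_two_rpow_sub_card_le hp0.le K T)
      (sq_nonneg _)).trans ?_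
    rw [Finset.mul_sum]
    refine Finset.sum_le_sum fun n _ ↦ ?_
    have hweight := rieszConst_div_sq_mul_le_Wweight_mul_Riesz_sq hσ hα (β := α - p / 4)
      (by linarith) (by linarith) n
    rwa [show 4 * (α - (α - p / 4)) = p by ring] at hweight
  have hupper := h.mul_sum_sdiff_Riesz_le (β := α - p / 4) (by linarith) hc
    (fun n hn ↦ Wweight_nonneg hσ (by linarith) hα hn) (by linarith) (by linarith) (by linarith) hη
  rw [show 2 * σ + 3 - 4 * (α - p / 4) = p by linarith] at hupper
  have hsum : HasSum (fun n : ℕ ↦ (n + 2 : ℝ) ^ (-(1 + p)) - 4 * (n + 2 : ℝ) ^ (-2 : ℝ)) _ :=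
    (summable_add_two_rpow (lt_add_of_pos_right 1 hp0)).hasSum.sub
      ((summable_add_two_rpow one_lt_two).hasSum.mul_left 4)
  rw [← sub_sub]
  exact le_of_tendsto' (((hsum.tendsto_sum_nat.sub_const _).const_mul κ).const_mul c) fun N ↦
    (mul_le_mul_of_nonneg_left (hlower _) hc).trans (hupper _)

lemma HardyOff.le_one (h : HardyOff σ c (Wweight σ α) K) (hσ : 4 * α = 3 + 2 * σ) (hα0 : 1 / 2 < α)
    (hα : α < 3 / 2) : c ≤ 1 := by
  rcases le_or_gt c 0 with hc | hc
  · linarith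
  have hα_pos : 0 < α := by linarith
  have hβ : Tendsto (fun p : ℝ ↦ α - p / 4) (𝓝[>] 0) (𝓝 α) :=
    ((by fun_prop : Continuous fun p : ℝ ↦ α - p / 4).tendsto' 0 α (by simp)).mono_left
      nhdsWithin_le_nhds
  have hp0 : Tendsto (fun p : ℝ ↦ p) (𝓝[>] 0) (𝓝 0) := nhdsWithin_le_nhds
  have hκ : Tendsto (fun p ↦ (rieszConst (α - p / 4) / rieszConst α) ^ 2) (𝓝[>] 0) (𝓝 1) := by
    simpa [div_self (rieszConst_pos hα_pos hα).ne'] using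
      (((continuousAt_rieszConst hα_pos hα).tendsto.comp hβ).div_const (rieszConst α)).pow 2
  have hQ : Tendsto (fun p ↦ Qform σ ((K : Set ℕ).indicator (Riesz (α - p / 4)))) (𝓝[>] 0)
      (𝓝 (Qform σ ((K : Set ℕ).indicator (Riesz α)))) :=
    tendsto_Qform_indicator σ K fun n ↦ (continuousAt_Riesz hα_pos hα n).tendsto.comp hβ
  have h2 : Tendsto (fun p : ℝ ↦ (2 : ℝ) ^ p) (𝓝[>] 0) (𝓝 1) := by
    simpa [Function.comp_def] using
      (continuousAt_const_rpow (a := (2 : ℝ)) two_ne_zero).tendsto.comp hp0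
  refine le_of_forall_pos_le_add fun η hη ↦ ?_
  have hlhs := (hκ.mul (tendsto_mul_tsum_add_two_rpow.sub (hp0.mul_const
    (4 * ∑' n : ℕ, (n + 2 : ℝ) ^ (-2 : ℝ) + K.card)))).const_mul c
  have hrhs := (h2.const_mul (1 + η)).add ((hp0.mul hQ).const_mul (1 + η⁻¹))
  simp only [zero_mul, sub_zero, mul_one, mul_zero, add_zero] at hlhs hrhs
  refine le_of_tendsto_of_tendsto hlhs hrhs ?_
  have hlt : ∀ᶠ p : ℝ in 𝓝[>] 0, p < 4 * α := hp0.eventually (gt_mem_nhds (by linarith))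
  filter_upwards [self_mem_nhdsWithin, hlt] with p hp hpα
  have hp := mem_Ioi.1 hp
  have hmul := mul_le_mul_of_nonneg_left (h.mul_tsum_sub_le hc.le hσ hα0 hα hp hpα hη) hp.le
  have hcancel : p * (2 ^ p / p) = 2 ^ p := mul_div_cancel₀ _ hp.ne'
  linear_combination hmul + (1 + η) * hcancel

end HardyOff

theorem stmt_12_general (σ : ℝ) (hσ : -(1 / 2) < σ) (hσ' : σ < 3 / 2) (lam : ℝ) (K : Finset ℕ)
    (h : ∀ f : ℕ → ℝ, f 0 = 0 → (Function.support f).Finite → (∀ n ∈ K, f n = 0) →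
      (1 + lam) * (∑' n : ℕ, Wweight σ ((3 + 2 * σ) / 4) n * (f n) ^ 2) ≤ Qform σ f) :
    lam ≤ 0 := by
  have hHardy : HardyOff σ (1 + lam) (Wweight σ ((3 + 2 * σ) / 4)) K := h
  have hle : 1 + lam ≤ 1 := hHardy.le_one (by ring) (by linarith) (by linarith)
  linarith

/-- The optimal Hardy-weight `W^op_σ = W_{(3+2σ)/4, σ}` is optimal near infinity. -/
theorem stmt_12 (σ : ℝ) (hσ0 : 0 < σ) (hσ1 : σ ≤ 1) (lam : ℝ) (hlam : 0 ≤ lam)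
    (K : Finset ℕ)
    (h : ∀ f : ℕ → ℝ, f 0 = 0 → (Function.support f).Finite → (∀ n ∈ K, f n = 0) →
      (1 + lam) * (∑' n : ℕ, Wweight σ ((3 + 2 * σ) / 4) n * (f n) ^ 2) ≤ Qform σ f) :
    lam = 0 :=
  le_antisymm (stmt_12_general σ (by linarith) (by linarith) lam K h) hlam
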